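/- For all real α, β > −1, every j ∈ ℕ, every sequence (M_n) of nonnegative reals, and every n ≥ 1, the polynomial Q_n has exactly n real zeros, all simple (i.e., Q_n has n distinct real roots and each root has multiplicity one), and at most one of these zeros lies outside the interval [−1, 1]. -/

import Mathlib

open Polynomial Filter

/-- The Jacobi polynomial `P_n^{(α,β)}` as a real polynomial. -/
noncomputable def jacobiP (α β : ℝ) (n : ℕ) : Polynomial ℝ :=
  ∑ k ∈ Finset.range (n + 1),
    Polynomial.C (Real.Gamma (n + α + 1) / (Real.Gamma ((n : ℝ) - k + 1) * Real.Gamma (α + k + 1)) *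
        (Real.Gamma (n + β + 1) / (Real.Gamma ((k : ℝ) + 1) * Real.Gamma ((n : ℝ) - k + β + 1)))) *
      (Polynomial.C (2⁻¹ : ℝ) * (Polynomial.X - 1)) ^ k *
      (Polynomial.C (2⁻¹ : ℝ) * (Polynomial.X + 1)) ^ (n - k)

/-- The squared Jacobi norm `‖P_n^{(α,β)}‖²`. -/
noncomputable def jacobiNormSq (α β : ℝ) (n : ℕ) : ℝ :=
  ∫ x in (-1 : ℝ)..1, (jacobiP α β n).eval x ^ 2 * (1 - x) ^ α * (1 + x) ^ β

/-- The kernel `K_n^{(j,k)}(x,y)`. -/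
noncomputable def kernK (α β : ℝ) (j k n : ℕ) (x y : ℝ) : ℝ :=
  ∑ i ∈ Finset.range (n + 1),
    (Polynomial.derivative^[j] (jacobiP α β i)).eval x *
      (Polynomial.derivative^[k] (jacobiP α β i)).eval y / jacobiNormSq α β i

/-- The kernel `K_n^{(j,0)}(1,·)` as a polynomial. -/
noncomputable def kernKPoly (α β : ℝ) (j n : ℕ) : Polynomial ℝ :=
  ∑ i ∈ Finset.range (n + 1),
    Polynomial.C ((Polynomial.derivative^[j] (jacobiP α β i)).eval 1 / jacobiNormSq α β i) *
      jacobiP α β i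

/-- The varying Sobolev inner product `(f,g)_{S,n}` with mass `m`. -/
noncomputable def sobInner (α β : ℝ) (j : ℕ) (m : ℝ) (f g : Polynomial ℝ) : ℝ :=
  (∫ x in (-1 : ℝ)..1, f.eval x * g.eval x * (1 - x) ^ α * (1 + x) ^ β) +
    m * (Polynomial.derivative^[j] f).eval 1 * (Polynomial.derivative^[j] g).eval 1

/-- The Jacobi–Sobolev orthogonal polynomial `Q_n`. -/
noncomputable def sobQ (α β : ℝ) (j : ℕ) (Ms : ℕ → ℝ) (n : ℕ) : Polynomial ℝ :=
  jacobiP α β n -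
    Polynomial.C (Ms n * (Polynomial.derivative^[j] (jacobiP α β n)).eval 1 /
        (1 + Ms n * kernK α β j j (n - 1) 1 1)) *
      kernKPoly α β j (n - 1)

/-!
Let `L` be integration against the Jacobi weight and `Q = P_n - c * K_{n-1}^{(j,0)}(1, ·)`. By the
reproducing property of the kernel, `L (Q * p) = 0` for every `p` of degree less than `n` whose
`j`-th derivative vanishes at `1`.

Let `S` be the set of points of `(-1, 1)` at which `Q` changes sign, `φ = ∏ s ∈ S, (X - s)` and
`Q = σ * φ * T` with `σ` constant and `T ≥ 0` on `(-1, 1)`. All derivatives of `φ` at `1` are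
nonnegative, so some nonzero `l` of degree at most one, nonnegative on `(-∞, 1]`, satisfies
`(l * φ)^{(j)}(1) = 0`. If `T` had degree at least two, then `l * φ` would be orthogonal to `Q`,
whereas `Q * l * φ = σ * φ ^ 2 * T * l` has constant sign on `(-1, 1)`. Hence `T` has degree at most
one; being nonnegative on the open interval, it has no zero there.
-/

section Multiplier

variable {R : Type*} [CommRing R]

lemma eval_iterate_derivative_C_sub_X_mul (φ : R[X]) (ξ : R) (j : ℕ) :
    (derivative^[j] ((C ξ - X) * φ)).eval ξ = -(j * (derivative^[j - 1] φ).eval ξ) := by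
  rw [sub_mul, mul_comm X, iterate_derivative_sub, iterate_derivative_C_mul,
    iterate_derivative_mul_X, eval_sub, eval_C_mul, eval_add, eval_mul_X, eval_smul, nsmul_eq_mul]
  ring

variable [LinearOrder R] [IsStrictOrderedRing R]

lemma eval_iterate_derivative_nodal_nonneg {S : Finset R} {ξ : R} (hS : ∀ s ∈ S, s ≤ ξ) (j : ℕ) :
    0 ≤ (derivative^[j] (Lagrange.nodal S id)).eval ξ := by
  rcases le_or_gt j S.card with hj | hj
  · have hprod : ∀ T ∈ S.powersetCard (S.card - j), 0 ≤ ∏ s ∈ T, (ξ - s) := fun T hT =>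
      Finset.prod_nonneg fun s hs => sub_nonneg.2 (hS s ((Finset.mem_powersetCard.1 hT).1 hs))
    simp only [Lagrange.nodal, id, iterate_derivative_prod_X_sub_C hj, eval_mul, eval_natCast,
      eval_finsetSum, eval_prod, eval_sub, eval_X, eval_C]
    exact mul_nonneg (Nat.cast_nonneg _) (Finset.sum_nonneg hprod)
  · rw [iterate_derivative_eq_zero_of_degree_lt (by simpa using hj), eval_zero]

lemma exists_linear_mul_eval_iterate_derivative_eq_zero {φ : R[X]} {ξ : R}
    (hφ : ∀ i, 0 ≤ (derivative^[i] φ).eval ξ) (j : ℕ) :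
    ∃ l : R[X], l ≠ 0 ∧ l.natDegree ≤ 1 ∧ (∀ x ≤ ξ, 0 ≤ l.eval x) ∧
      (derivative^[j] (l * φ)).eval ξ = 0 := by
  set e := (derivative^[j] φ).eval ξ with he
  set f := (j : R) * (derivative^[j - 1] φ).eval ξ with hf
  rcases eq_or_ne e 0 with he0 | he0
  · exact ⟨1, one_ne_zero, by simp, by simp, by rw [one_mul, ← he, he0]⟩
  -- Choose `l = f + e (ξ - X)`, for which the `j`-th derivative of `l * φ` at `ξ` is `f e - e f`.
  · refine ⟨C f + C e * (C ξ - X), ?_, by compute_degree, fun x hx => ?_, ?_⟩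
    · exact fun h => he0 (by simpa [coeff_X] using congrArg (coeff · 1) h)
    · simp only [eval_add, eval_mul, eval_sub, eval_C, eval_X]
      exact add_nonneg (mul_nonneg (Nat.cast_nonneg j) (hφ _))
        (mul_nonneg (hφ j) (sub_nonneg.2 hx))
    · rw [add_mul, mul_assoc, iterate_map_add, iterate_derivative_C_mul,
        iterate_derivative_C_mul, eval_add, eval_C_mul, eval_C_mul,
        eval_iterate_derivative_C_sub_X_mul, ← he, ← hf]
      ring

end Multiplier

section SignChanges

lemma isRoot_derivative_of_nonneg {I : Set ℝ} (hI : IsOpen I) {p : ℝ[X]}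
    (hp : ∀ x ∈ I, 0 ≤ p.eval x) {x : ℝ} (hx : x ∈ I) (hroot : p.IsRoot x) :
    p.derivative.IsRoot x := by
  have hmin : IsLocalMin (fun y => p.eval y) x := by
    filter_upwards [hI.mem_nhds hx] with y hy
    rw [hroot.eq_zero]
    exact hp y hy
  rw [IsRoot.def, ← p.deriv]
  exact hmin.deriv_eq_zero

lemma not_isRoot_of_nonneg_of_natDegree_le_one {I : Set ℝ} (hI : IsOpen I) {p : ℝ[X]}
    (hp0 : p ≠ 0) (hp : ∀ x ∈ I, 0 ≤ p.eval x) (hdeg : p.natDegree ≤ 1) {x : ℝ} (hx : x ∈ I) :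
    ¬ p.IsRoot x := by
  intro hroot
  have hmult : 1 < p.rootMultiplicity x :=
    (one_lt_rootMultiplicity_iff_isRoot hp0).2 ⟨hroot, isRoot_derivative_of_nonneg hI hp hx hroot⟩
  have hcard : p.rootMultiplicity x ≤ p.natDegree := by
    rw [← count_roots]
    exact (Multiset.count_le_card x _).trans p.card_roots'
  omega

lemma nonneg_or_nonpos_of_forall_eval_ne_zero {I : Set ℝ} (hI : IsPreconnected I) {p : ℝ[X]}
    (hp : ∀ x ∈ I, p.eval x ≠ 0) : (∀ x ∈ I, 0 ≤ p.eval x) ∨ ∀ x ∈ I, p.eval x ≤ 0 := by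
  by_contra! ⟨⟨x, hx, hneg⟩, ⟨y, hy, hpos⟩⟩
  obtain ⟨z, hz, hz0⟩ := hI.intermediate_value hx hy p.continuous.continuousOn ⟨hneg.le, hpos.le⟩
  exact hp z hz hz0

/-- The nodes in `S` are the points of `I` at which `Q` changes sign. -/
lemma exists_eq_C_mul_nodal_mul_of_nonneg {I : Set ℝ} (hI : IsPreconnected I) (Q : ℝ[X]) :
    ∃ (σ : ℝ) (S : Finset ℝ) (T : ℝ[X]), σ ≠ 0 ∧ (∀ s ∈ S, s ∈ I) ∧ (∀ x ∈ I, 0 ≤ T.eval x) ∧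
      Q = C σ * (Lagrange.nodal S id * T) := by
  induction hd : Q.natDegree using Nat.strong_induction_on generalizing Q with
  | h d ih =>
    by_cases hroot : Q ≠ 0 ∧ ∃ r ∈ I, Q.IsRoot r
    · obtain ⟨hQ, r, hr, hQr⟩ := hroot
      obtain ⟨Q', rfl⟩ := dvd_iff_isRoot.2 hQr
      have hlt : Q'.natDegree < d := by
        rw [← hd, natDegree_mul (X_sub_C_ne_zero r) (right_ne_zero_of_mul hQ), natDegree_X_sub_C]
        omega
      obtain ⟨σ, S, T, hσ, hS, hT, rfl⟩ := ih _ hlt Q' rfl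
      by_cases hrS : r ∈ S
      · refine ⟨σ, S.erase r, (X - C r) ^ 2 * T, hσ, fun s hs => hS s (Finset.mem_of_mem_erase hs),
          fun x hx => ?_, ?_⟩
        · rw [eval_mul, eval_pow]
          exact mul_nonneg (sq_nonneg _) (hT x hx)
        · rw [Lagrange.nodal_eq_mul_nodal_erase hrS, id]
          ring
      · refine ⟨σ, insert r S, T, hσ, Finset.forall_mem_insert .. |>.2 ⟨hr, hS⟩, hT, ?_⟩
        rw [Lagrange.nodal_insert_eq_nodal hrS, id]
        ring
    · have hconst : (∀ x ∈ I, 0 ≤ Q.eval x) ∨ ∀ x ∈ I, Q.eval x ≤ 0 := by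
        by_cases hQ : Q = 0
        · simp [hQ]
        · exact nonneg_or_nonpos_of_forall_eval_ne_zero hI fun x hx hx0 => hroot ⟨hQ, x, hx, hx0⟩
      rcases hconst with hnonneg | hnonpos
      · exact ⟨1, ∅, Q, one_ne_zero, by simp, hnonneg, by simp⟩
      · exact ⟨-1, ∅, -Q, by simp, by simp, by simpa using hnonpos, by simp⟩

end SignChanges

section PositiveFunctional

/-- A linear functional on polynomials is positive on `I` if it is strictly positive at every
nonzero polynomial that is nonnegative on `I`; integration against a positive weight on an interval
is the model case. -/
def IsPositiveOn (L : ℝ[X] →ₗ[ℝ] ℝ) (I : Set ℝ) : Prop :=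
  ∀ p : ℝ[X], p ≠ 0 → (∀ x ∈ I, 0 ≤ p.eval x) → 0 < L p

variable {L : ℝ[X] →ₗ[ℝ] ℝ} {I : Set ℝ} {ξ : ℝ} {j : ℕ}

lemma IsPositiveOn.map_mul_self_pos (hL : IsPositiveOn L I) {p : ℝ[X]} (hp : p ≠ 0) :
    0 < L (p * p) :=
  hL _ (mul_self_ne_zero.2 hp) fun x _ => by
    rw [eval_mul]
    exact mul_self_nonneg _

lemma natDegree_le_one_of_orthogonal_to_vanishing_derivative (hL : IsPositiveOn L I)
    (hξ : ∀ x ∈ I, x ≤ ξ) {σ : ℝ} (hσ : σ ≠ 0) {S : Finset ℝ} (hS : ∀ s ∈ S, s ∈ I)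
    {T : ℝ[X]} (hT0 : T ≠ 0) (hT : ∀ x ∈ I, 0 ≤ T.eval x)
    (horth : ∀ p : ℝ[X], p.degree < (C σ * (Lagrange.nodal S id * T)).degree →
      (derivative^[j] p).eval ξ = 0 → L (C σ * (Lagrange.nodal S id * T) * p) = 0) :
    T.natDegree ≤ 1 := by
  by_contra! hdeg
  set φ := Lagrange.nodal S id
  have hφ0 : φ ≠ 0 := Lagrange.nodal_ne_zero
  obtain ⟨l, hl0, hldeg, hlnonneg, hlj⟩ := exists_linear_mul_eval_iterate_derivative_eq_zero
    (eval_iterate_derivative_nodal_nonneg fun s hs => hξ s (hS s hs)) j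
  have hlt : (l * φ).degree < (C σ * (φ * T)).degree := by
    refine (natDegree_lt_natDegree_iff (mul_ne_zero hl0 hφ0)).1 ?_
    rw [natDegree_C_mul hσ, natDegree_mul hl0 hφ0, natDegree_mul hφ0 hT0]
    omega
  have hpos : 0 < L (φ ^ 2 * T * l) := by
    refine hL _ (mul_ne_zero (mul_ne_zero (pow_ne_zero 2 hφ0) hT0) hl0) fun x hx => ?_
    rw [eval_mul, eval_mul, eval_pow]
    exact mul_nonneg (mul_nonneg (sq_nonneg _) (hT x hx)) (hlnonneg x (hξ x hx))
  have hzero : σ * L (φ ^ 2 * T * l) = 0 := by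
    rw [← smul_eq_mul, ← map_smul, ← horth _ hlt hlj, smul_eq_C_mul]
    congr 1
    ring
  exact hpos.ne' ((mul_eq_zero.1 hzero).resolve_left hσ)

theorem roots_of_orthogonal_to_vanishing_derivative [DecidablePred (· ∈ I)] (hI : IsOpen I)
    (hIc : IsPreconnected I) (hL : IsPositiveOn L I) (hξ : ∀ x ∈ I, x ≤ ξ) {Q : ℝ[X]} (hQ : Q ≠ 0)
    (horth : ∀ p : ℝ[X], p.degree < Q.degree → (derivative^[j] p).eval ξ = 0 → L (Q * p) = 0) :
    Q.roots.card = Q.natDegree ∧ Q.roots.Nodup ∧ (Q.roots.filter (· ∉ I)).card ≤ 1 := by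
  obtain ⟨σ, S, T, hσ, hS, hT, rfl⟩ := exists_eq_C_mul_nodal_mul_of_nonneg hIc Q
  have hT0 : T ≠ 0 := right_ne_zero_of_mul (right_ne_zero_of_mul hQ)
  have hφT : Lagrange.nodal S id * T ≠ 0 := right_ne_zero_of_mul hQ
  have hdeg : T.natDegree ≤ 1 :=
    natDegree_le_one_of_orthogonal_to_vanishing_derivative hL hξ hσ hS hT0 hT horth
  have hcard : T.roots.card = T.natDegree := splits_iff_card_roots.1 (.of_natDegree_le_one hdeg)
  have hroots : (C σ * (Lagrange.nodal S id * T)).roots = S.val + T.roots := by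
    rw [roots_C_mul _ hσ, roots_mul hφT, Lagrange.nodal_eq]
    exact congrArg (· + T.roots) (roots_prod_X_sub_C S)
  have hnotMem : ∀ x ∈ T.roots, x ∉ S := fun x hx hxS =>
    not_isRoot_of_nonneg_of_natDegree_le_one hI hT0 hT hdeg (hS x hxS) (isRoot_of_mem_roots hx)
  have hfilter : S.val.filter (· ∉ I) = 0 :=
    Multiset.filter_eq_nil.2 fun s hs => not_not.2 (hS s hs)
  rw [hroots]
  refine ⟨?_, Multiset.nodup_add.2 ⟨S.nodup, ?_, ?_⟩, ?_⟩
  · rw [Multiset.card_add, hcard, natDegree_C_mul hσ, natDegree_mul Lagrange.nodal_ne_zero hT0,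
      Lagrange.natDegree_nodal, Finset.card_val]
  · exact Multiset.nodup_iff_count_le_one.2 fun x =>
      (Multiset.count_le_card x _).trans (hcard.trans_le hdeg)
  · exact Multiset.disjoint_right.2 (hnotMem _)
  · rw [Multiset.filter_add, hfilter, zero_add]
    exact (Multiset.card_le_card (Multiset.filter_le _ _)).trans (hcard.trans_le hdeg)

end PositiveFunctional

section ReproducingKernel

lemma map_eq_zero_of_degree_lt {R M : Type*} [CommRing R] [AddCommGroup M] [Module R M]
    {L : R[X] →ₗ[R] M} {a : R} {n : ℕ} (h : ∀ m < n, L ((X - C a) ^ m) = 0) {p : R[X]}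
    (hp : p.degree < n) : L p = 0 := by
  rw [← sum_taylor_eq p a, Polynomial.sum, map_sum]
  refine Finset.sum_eq_zero fun m hm => ?_
  have hmn : m < n := by
    have hle := le_degree_of_mem_supp m hm
    rw [degree_taylor] at hle
    exact_mod_cast hle.trans_lt hp
  rw [← smul_eq_C_mul, map_smul, h m hmn, smul_zero]

theorem map_reproducingKernel_mul {K : Type*} [Field K] (L Λ : K[X] →ₗ[K] K)
    (P : Polynomial.Sequence K) (horth : Pairwise fun i k => L (P i * P k) = 0)
    (hnorm : ∀ i, L (P i * P i) ≠ 0) {n : ℕ} {p : K[X]} (hp : p.degree < n) :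
    L ((∑ i ∈ Finset.range n, C (Λ (P i) / L (P i * P i)) * P i) * p) = Λ p := by
  have hspan : p ∈ Submodule.span K (P '' Set.Iio n) := by
    rw [P.span_degreeLT fun i _ => (leadingCoeff_ne_zero.2 (P.ne_zero i)).isUnit]
    exact mem_degreeLT.2 hp
  refine LinearMap.eqOn_span (f := L ∘ₗ LinearMap.mulLeft K _) (g := Λ) ?_ hspan
  rintro _ ⟨k, hk, rfl⟩
  have hterm : ∀ i, L (C (Λ (P i) / L (P i * P i)) * P i * P k) =
      Λ (P i) / L (P i * P i) * L (P i * P k) := fun i => by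
    rw [mul_assoc, ← smul_eq_C_mul, map_smul, smul_eq_mul]
  simp only [LinearMap.comp_apply, LinearMap.mulLeft_apply, Finset.sum_mul, map_sum, hterm]
  rw [Finset.sum_eq_single_of_mem k (Finset.mem_range.2 hk)
    fun i _ hik => by rw [horth hik, mul_zero], div_mul_cancel₀ _ (hnorm k)]

end ReproducingKernel

section WeightedIntegral

open MeasureTheory

variable {a b : ℝ} {w : ℝ → ℝ}

lemma intervalIntegrable_eval_mul (hw : IntervalIntegrable w volume a b) (p : ℝ[X]) :
    IntervalIntegrable (fun x => p.eval x * w x) volume a b :=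
  hw.continuousOn_mul p.continuous.continuousOn

/-- Integration of polynomials against an integrable weight `w` on `(a, b)`, as a linear functional;
the integrability proof is an argument because linearity depends on it. -/
noncomputable def weightedIntegral (hw : IntervalIntegrable w volume a b) : ℝ[X] →ₗ[ℝ] ℝ where
  toFun p := ∫ x in a..b, p.eval x * w x
  map_add' p q := by
    simp only [eval_add, add_mul]
    exact intervalIntegral.integral_add (intervalIntegrable_eval_mul hw p)
      (intervalIntegrable_eval_mul hw q)
  map_smul' c p := by
    simp only [eval_smul, smul_mul_assoc, RingHom.id_apply]
    exact intervalIntegral.integral_smul c _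

lemma weightedIntegral_apply (hw : IntervalIntegrable w volume a b) (p : ℝ[X]) :
    weightedIntegral hw p = ∫ x in a..b, p.eval x * w x :=
  rfl

lemma isPositiveOn_weightedIntegral (hab : a < b) (hw : IntervalIntegrable w volume a b)
    (hpos : ∀ x ∈ Set.Ioo a b, 0 < w x) : IsPositiveOn (weightedIntegral hw) (Set.Ioo a b) := by
  intro p hp hnonneg
  have hae : 0 ≤ᵐ[volume.restrict (Set.uIoc a b)] fun x => p.eval x * w x := by
    rw [Set.uIoc_of_le hab.le, EventuallyLE, ← restrict_Ioo_eq_restrict_Ioc,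
      ae_restrict_iff' measurableSet_Ioo]
    exact .of_forall fun x hx => mul_nonneg (hnonneg x hx) (hpos x hx).le
  have hsub : Set.Ioo a b \ ↑p.roots.toFinset ⊆
      Function.support (fun x => p.eval x * w x) ∩ Set.Ioc a b := by
    refine fun x ⟨hx, hroot⟩ => ⟨mul_ne_zero (fun h0 => hroot ?_) (hpos x hx).ne',
      Set.Ioo_subset_Ioc_self hx⟩
    simpa [hp] using h0
  refine (intervalIntegral.integral_pos_iff_support_of_nonneg_ae' hae
    (intervalIntegrable_eval_mul hw p)).2 ⟨hab, lt_of_lt_of_le ?_ (measure_mono hsub)⟩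
  rw [measure_sdiff_null (Finset.measure_zero _ _), Real.volume_Ioo, ENNReal.ofReal_pos]
  exact sub_pos.2 hab

end WeightedIntegral

section JacobiWeight

open MeasureTheory ProbabilityTheory

variable {α β : ℝ}

/-- The weight `(1 - x) ^ α * (1 + x) ^ β` on `(-1, 1)` with respect to which the Jacobi polynomials
are orthogonal. -/
noncomputable def jacobiWeight (α β x : ℝ) : ℝ := (1 - x) ^ α * (1 + x) ^ β

lemma jacobiWeight_pos {x : ℝ} (hx : x ∈ Set.Ioo (-1 : ℝ) 1) : 0 < jacobiWeight α β x :=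
  mul_pos (Real.rpow_pos_of_pos (sub_pos.2 hx.2) _)
    (Real.rpow_pos_of_pos (neg_lt_iff_pos_add'.1 hx.1) _)

lemma jacobiWeight_add_natCast {x : ℝ} (hx : x ∈ Set.Ioo (-1 : ℝ) 1) (k m : ℕ) :
    jacobiWeight (α + k) (β + m) x = (1 - x) ^ k * (1 + x) ^ m * jacobiWeight α β x := by
  rw [jacobiWeight, jacobiWeight, Real.rpow_add_natCast (sub_pos.2 hx.2).ne',
    Real.rpow_add_natCast (neg_lt_iff_pos_add'.1 hx.1).ne']
  ring

lemma intervalIntegrable_jacobiWeight (hα : -1 < α) (hβ : -1 < β) :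
    IntervalIntegrable (jacobiWeight α β) volume (-1) 1 := by
  have hleft : IntervalIntegrable (fun x : ℝ => (1 + x) ^ β) volume (-1) 0 := by
    simpa using (intervalIntegral.intervalIntegrable_rpow' (a := 0) (b := 1) hβ).comp_add_left 1
  have hright : IntervalIntegrable (fun x : ℝ => (1 - x) ^ α) volume 0 1 := by
    simpa using
      ((intervalIntegral.intervalIntegrable_rpow' (a := 0) (b := 1) hα).comp_sub_left 1).symm
  refine (hleft.continuousOn_mul fun x hx => ?_).trans (hright.mul_continuousOn fun x hx => ?_)
  · rw [Set.uIcc_of_le (by norm_num)] at hx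
    exact (ContinuousAt.rpow_const (by fun_prop) (.inl (by linarith [hx.2]))).continuousWithinAt
  · rw [Set.uIcc_of_le (by norm_num)] at hx
    exact (ContinuousAt.rpow_const (by fun_prop) (.inl (by linarith [hx.1]))).continuousWithinAt

lemma integral_rpow_mul_one_sub_rpow {u v : ℝ} (hu : 0 < u) (hv : 0 < v) :
    ∫ t in (0 : ℝ)..1, t ^ (u - 1) * (1 - t) ^ (v - 1) = beta u v := by
  rw [beta_eq_betaIntegralReal u v hu hv, Complex.betaIntegral,
    ← Complex.ofReal_re (∫ t in _..1, _), ← intervalIntegral.integral_ofReal]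
  congr 1
  refine intervalIntegral.integral_congr fun t ht => ?_
  rw [Set.uIcc_of_le zero_le_one] at ht
  push_cast [Complex.ofReal_cpow ht.1, Complex.ofReal_cpow (sub_nonneg.2 ht.2)]
  rfl

lemma integral_jacobiWeight (hα : -1 < α) (hβ : -1 < β) :
    ∫ x in (-1 : ℝ)..1, jacobiWeight α β x = 2 ^ (α + β + 1) * beta (α + 1) (β + 1) := by
  have hsubst : ∀ t ∈ Set.Ioo (0 : ℝ) 1, jacobiWeight α β (1 - 2 * t) =
      2 ^ (α + β) * (t ^ (α + 1 - 1) * (1 - t) ^ (β + 1 - 1)) := fun t ht => by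
    rw [jacobiWeight, show 1 - (1 - 2 * t) = 2 * t by ring,
      show 1 + (1 - 2 * t) = 2 * (1 - t) by ring,
      Real.mul_rpow zero_le_two ht.1.le, Real.mul_rpow zero_le_two (sub_nonneg.2 ht.2.le),
      Real.rpow_add zero_lt_two, add_sub_cancel_right, add_sub_cancel_right]
    ring
  calc ∫ x in (-1 : ℝ)..1, jacobiWeight α β x
      = 2 * ∫ t in (0 : ℝ)..1, jacobiWeight α β (1 - 2 * t) := by
        rw [intervalIntegral.mul_integral_comp_sub_mul]
        norm_num
    _ = 2 * ∫ t in (0 : ℝ)..1, 2 ^ (α + β) * (t ^ (α + 1 - 1) * (1 - t) ^ (β + 1 - 1)) := by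
        rw [intervalIntegral.integral_congr_Ioo_of_le zero_le_one hsubst]
    _ = 2 ^ (α + β + 1) * beta (α + 1) (β + 1) := by
        rw [intervalIntegral.integral_const_mul,
          integral_rpow_mul_one_sub_rpow (neg_lt_iff_pos_add.1 hα) (neg_lt_iff_pos_add.1 hβ),
          Real.rpow_add zero_lt_two _ 1, Real.rpow_one]
        ring

/-- Integration of polynomials against the Jacobi weight on `(-1, 1)`. -/
noncomputable def jacobiFunctional (hα : -1 < α) (hβ : -1 < β) : ℝ[X] →ₗ[ℝ] ℝ :=
  weightedIntegral (intervalIntegrable_jacobiWeight hα hβ)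

lemma isPositiveOn_jacobiFunctional (hα : -1 < α) (hβ : -1 < β) :
    IsPositiveOn (jacobiFunctional hα hβ) (Set.Ioo (-1) 1) :=
  isPositiveOn_weightedIntegral (by norm_num) _ fun _ => jacobiWeight_pos

lemma jacobiFunctional_X_sub_one_pow_mul_X_add_one_pow (hα : -1 < α) (hβ : -1 < β) (k m : ℕ) :
    jacobiFunctional hα hβ ((X - 1) ^ k * (X + 1) ^ m) =
      (-1) ^ k * (2 ^ (α + k + (β + m) + 1) * beta (α + k + 1) (β + m + 1)) := by
  have hweight : ∀ x ∈ Set.Ioo (-1 : ℝ) 1, ((X - 1) ^ k * (X + 1) ^ m : ℝ[X]).eval x *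
      jacobiWeight α β x = (-1) ^ k * jacobiWeight (α + k) (β + m) x := fun x hx => by
    simp only [jacobiWeight_add_natCast hx, eval_mul, eval_pow, eval_sub, eval_add, eval_X,
      eval_one]
    rw [← neg_sub 1 x, neg_pow (1 - x), add_comm x]
    ring
  rw [jacobiFunctional, weightedIntegral_apply,
    intervalIntegral.integral_congr_Ioo_of_le (by norm_num) hweight,
    intervalIntegral.integral_const_mul,
    integral_jacobiWeight (hα.trans_le (le_add_of_nonneg_right k.cast_nonneg))
      (hβ.trans_le (le_add_of_nonneg_right m.cast_nonneg))]

end JacobiWeight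
section JacobiPolynomial

variable {α β : ℝ}

lemma degree_sum_C_mul_of_isMonicOfDegree {R ι : Type*} [Semiring R] {s : Finset ι} {c : ι → R}
    {p : ι → R[X]} {n : ℕ} (hp : ∀ i ∈ s, IsMonicOfDegree (p i) n) (hc : ∑ i ∈ s, c i ≠ 0) :
    (∑ i ∈ s, C (c i) * p i).degree = n := by
  refine degree_eq_of_le_of_coeff_ne_zero (degree_le_of_natDegree_le ?_) ?_
  · exact natDegree_sum_le_of_forall_le _ _ fun i hi =>
      (natDegree_C_mul_le _ _).trans (hp i hi).natDegree_eq.le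
  · have hcoeff : ∀ i ∈ s, (C (c i) * p i).coeff n = c i := fun i hi => by
      rw [coeff_C_mul, ← (hp i hi).natDegree_eq, (hp i hi).monic.coeff_natDegree, mul_one]
    rwa [finsetSum_coeff, Finset.sum_congr rfl hcoeff]

/-- The coefficient of `(X - 1) ^ k * (X + 1) ^ (n - k)` in the `n`-th Jacobi polynomial, written
with a binomial coefficient in place of the Gamma values at integers. -/
noncomputable def jacobiCoeff (α β : ℝ) (n k : ℕ) : ℝ :=
  Real.Gamma (n + α + 1) * Real.Gamma (n + β + 1) / (n.factorial * 2 ^ n) *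
    (n.choose k / (Real.Gamma (α + k + 1) * Real.Gamma (β + (n - k : ℕ) + 1)))

lemma jacobiP_eq_sum_jacobiCoeff (α β : ℝ) (n : ℕ) :
    jacobiP α β n =
      ∑ k ∈ Finset.range (n + 1), C (jacobiCoeff α β n k) * ((X - 1) ^ k * (X + 1) ^ (n - k)) := by
  refine Finset.sum_congr rfl fun k hk => ?_
  have hkn : k ≤ n := Finset.mem_range_succ_iff.1 hk
  have hcoeff : jacobiCoeff α β n k =
      Real.Gamma (n + α + 1) / (Real.Gamma ((n : ℝ) - k + 1) * Real.Gamma (α + k + 1)) *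
        (Real.Gamma (n + β + 1) / (Real.Gamma ((k : ℝ) + 1) * Real.Gamma ((n : ℝ) - k + β + 1))) *
        2⁻¹ ^ k * 2⁻¹ ^ (n - k) := by
    rw [jacobiCoeff, ← Nat.cast_sub hkn, Real.Gamma_nat_eq_factorial, Real.Gamma_nat_eq_factorial,
      Nat.cast_choose ℝ hkn, mul_assoc _ (2⁻¹ ^ k), ← pow_add, Nat.add_sub_cancel' hkn, inv_pow,
      add_comm β]
    have hn : (n.factorial : ℝ) ≠ 0 := Nat.cast_ne_zero.2 n.factorial_ne_zero
    field_simp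
  rw [hcoeff, mul_pow, mul_pow]
  simp only [C_mul, C_pow]
  ring

lemma jacobiCoeff_pos (hα : -1 < α) (hβ : -1 < β) {n k : ℕ} (hkn : k ≤ n) :
    0 < jacobiCoeff α β n k := by
  have hGamma : ∀ {γ : ℝ}, -1 < γ → ∀ m : ℕ, 0 < Real.Gamma (γ + m + 1) := fun hγ m =>
    Real.Gamma_pos_of_pos (by linarith [m.cast_nonneg (α := ℝ)])
  have hchoose : (0 : ℝ) < n.choose k := Nat.cast_pos.2 (Nat.choose_pos hkn)
  rw [jacobiCoeff, add_comm (n : ℝ) α, add_comm (n : ℝ) β]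
  exact mul_pos (div_pos (mul_pos (hGamma hα n) (hGamma hβ n)) (by positivity))
    (div_pos hchoose (mul_pos (hGamma hα k) (hGamma hβ (n - k))))

lemma degree_jacobiP (hα : -1 < α) (hβ : -1 < β) (n : ℕ) : (jacobiP α β n).degree = n := by
  rw [jacobiP_eq_sum_jacobiCoeff]
  refine degree_sum_C_mul_of_isMonicOfDegree (fun k hk => ?_) (Finset.sum_pos (fun k hk =>
    jacobiCoeff_pos hα hβ (Finset.mem_range_succ_iff.1 hk)) (by simp)).ne'
  have hmonic := ((isMonicOfDegree_X_sub_one (1 : ℝ)).pow k).mul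
    ((isMonicOfDegree_X_add_one (1 : ℝ)).pow (n - k))
  rwa [one_mul, one_mul, Nat.add_sub_cancel' (Finset.mem_range_succ_iff.1 hk)] at hmonic

/-- The Jacobi polynomials, bundled with the fact that the `n`-th one has degree `n`. -/
noncomputable def jacobiSequence (hα : -1 < α) (hβ : -1 < β) : Polynomial.Sequence ℝ :=
  ⟨jacobiP α β, degree_jacobiP hα hβ⟩

end JacobiPolynomial

section Orthogonality

open ProbabilityTheory

variable {α β : ℝ}

lemma Gamma_add_natCast {z : ℝ} (hz : ∀ k : ℕ, z ≠ -k) (m : ℕ) :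
    Real.Gamma (z + m) = (ascPochhammer ℝ m).eval z * Real.Gamma z := by
  induction m with
  | zero => simp
  | succ m ih =>
    rw [Nat.cast_succ, ← add_assoc, Real.Gamma_add_one fun h => hz m (eq_neg_of_add_eq_zero_left h),
      ih, ascPochhammer_succ_eval]
    ring

lemma sum_neg_one_pow_mul_choose_mul_eval_eq_zero {R : Type*} [CommRing R] {p : R[X]} {n : ℕ}
    (hp : p.natDegree < n) (z : R) :
    ∑ k ∈ Finset.range (n + 1), (-1) ^ k * (n.choose k * p.eval (z + k)) = 0 := by
  have hdiff := congrFun (fwdDiff_iter_eq_zero_of_degree_lt hp) z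
  rw [fwdDiff_iter_eq_sum_shift, Pi.zero_apply] at hdiff
  rw [← mul_zero ((-1) ^ n), ← hdiff, Finset.mul_sum]
  refine Finset.sum_congr rfl fun k hk => ?_
  have hsign : (-1 : R) ^ n * (-1) ^ (n - k) = (-1) ^ k := by
    obtain ⟨d, rfl⟩ := Nat.exists_eq_add_of_le (Finset.mem_range_succ_iff.1 hk)
    rw [Nat.add_sub_cancel_left, pow_add, mul_assoc, ← mul_pow, neg_one_mul, neg_neg, one_pow,
      mul_one]
  rw [← hsign, zsmul_eq_mul, nsmul_eq_mul, mul_one]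
  push_cast
  ring

lemma jacobiFunctional_jacobiP_mul_X_sub_C_one_pow (hα : -1 < α) (hβ : -1 < β) {n m : ℕ}
    (hmn : m < n) : jacobiFunctional hα hβ (jacobiP α β n * (X - C 1) ^ m) = 0 := by
  set A := Real.Gamma (n + α + 1) * Real.Gamma (n + β + 1) / (n.factorial * 2 ^ n) * ((-1) ^ m *
    (2 ^ (α + β + n + m + 1) / Real.Gamma (α + β + n + m + 2))) with hA
  have hterm : ∀ k ∈ Finset.range (n + 1), jacobiFunctional hα hβ
      (C (jacobiCoeff α β n k) * ((X - 1) ^ k * (X + 1) ^ (n - k)) * (X - C 1) ^ m) =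
      A * ((-1) ^ k * (n.choose k * (ascPochhammer ℝ m).eval (α + 1 + k))) := fun k hk => by
    have hexp : α + ↑(k + m) + (β + ↑(n - k)) = α + β + n + m := by
      rw [Nat.cast_add, Nat.cast_sub (Finset.mem_range_succ_iff.1 hk)]
      ring
    have hz : 0 < α + 1 + k := by linarith [k.cast_nonneg (α := ℝ)]
    have hw : 0 < β + ↑(n - k) + 1 := by linarith [(n - k).cast_nonneg (α := ℝ)]
    have hGamma : Real.Gamma (α + ↑(k + m) + 1) =
        (ascPochhammer ℝ m).eval (α + 1 + k) * Real.Gamma (α + 1 + k) := by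
      rw [← Gamma_add_natCast fun i => (hz.trans_le' (neg_nonpos.2 i.cast_nonneg)).ne']
      congr 1
      push_cast
      ring
    have hzGamma := (Real.Gamma_pos_of_pos hz).ne'
    have hwGamma := (Real.Gamma_pos_of_pos hw).ne'
    rw [C_1, mul_assoc, mul_right_comm, ← pow_add, ← smul_eq_C_mul, map_smul, smul_eq_mul,
      jacobiFunctional_X_sub_one_pow_mul_X_add_one_pow, hexp, beta, hGamma, jacobiCoeff,
      show α + ↑(k + m) + 1 + (β + ↑(n - k) + 1) = α + β + n + m + 2 by linarith,
      add_right_comm α k 1, hA, pow_add]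
    field_simp
  rw [jacobiP_eq_sum_jacobiCoeff, Finset.sum_mul, map_sum, Finset.sum_congr rfl hterm,
    ← Finset.mul_sum, sum_neg_one_pow_mul_choose_mul_eval_eq_zero (by simpa using hmn), mul_zero]

lemma jacobiFunctional_jacobiP_mul (hα : -1 < α) (hβ : -1 < β) {n : ℕ} {p : ℝ[X]}
    (hp : p.degree < n) : jacobiFunctional hα hβ (jacobiP α β n * p) = 0 :=
  map_eq_zero_of_degree_lt (L := jacobiFunctional hα hβ ∘ₗ LinearMap.mulLeft ℝ (jacobiP α β n))
    (fun _ => jacobiFunctional_jacobiP_mul_X_sub_C_one_pow hα hβ) hp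

lemma pairwise_jacobiFunctional_jacobiP_mul_jacobiP (hα : -1 < α) (hβ : -1 < β) :
    Pairwise fun i k => jacobiFunctional hα hβ (jacobiP α β i * jacobiP α β k) = 0 := by
  have hlt : ∀ i k, i < k → jacobiFunctional hα hβ (jacobiP α β k * jacobiP α β i) = 0 :=
    fun i k hik => jacobiFunctional_jacobiP_mul hα hβ (by
      rw [degree_jacobiP hα hβ]
      exact_mod_cast hik)
  intro i k hik
  rcases hik.lt_or_gt with h | h
  · exact mul_comm (jacobiP α β i) _ ▸ hlt i k h
  · exact hlt k i h

lemma jacobiFunctional_jacobiP_mul_self (hα : -1 < α) (hβ : -1 < β) (n : ℕ) :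
    jacobiFunctional hα hβ (jacobiP α β n * jacobiP α β n) = jacobiNormSq α β n := by
  rw [jacobiFunctional, weightedIntegral_apply, jacobiNormSq]
  simp only [jacobiWeight, ← sq, eval_pow, mul_assoc]

end Orthogonality

section JacobiSobolev

variable {α β : ℝ}

lemma jacobiFunctional_kernKPoly_mul (hα : -1 < α) (hβ : -1 < β) (j : ℕ) {n : ℕ} {p : ℝ[X]}
    (hp : p.degree < (n + 1 : ℕ)) :
    jacobiFunctional hα hβ (kernKPoly α β j n * p) = (derivative^[j] p).eval 1 := by
  have hnorm : ∀ i, jacobiFunctional hα hβ (jacobiP α β i * jacobiP α β i) ≠ 0 := fun i =>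
    ((isPositiveOn_jacobiFunctional hα hβ).map_mul_self_pos
      ((jacobiSequence hα hβ).ne_zero i)).ne'
  have hrepr := map_reproducingKernel_mul (jacobiFunctional hα hβ) (leval 1 ∘ₗ derivative ^ j)
    (jacobiSequence hα hβ) (pairwise_jacobiFunctional_jacobiP_mul_jacobiP hα hβ) hnorm hp
  simpa [jacobiSequence, jacobiFunctional_jacobiP_mul_self, Module.End.pow_apply, kernKPoly,
    leval_apply] using hrepr

lemma degree_kernKPoly_lt (hα : -1 < α) (hβ : -1 < β) (j n : ℕ) :
    (kernKPoly α β j n).degree < (n + 1 : ℕ) := by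
  refine mem_degreeLT.1 (Submodule.sum_mem _ fun i hi => ?_)
  rw [← smul_eq_C_mul]
  refine Submodule.smul_mem _ _ (mem_degreeLT.2 ?_)
  rw [degree_jacobiP hα hβ]
  exact_mod_cast Finset.mem_range.1 hi

lemma degree_jacobiP_sub_C_mul_kernKPoly (hα : -1 < α) (hβ : -1 < β) (j : ℕ) (c : ℝ) (n : ℕ) :
    (jacobiP α β (n + 1) - C c * kernKPoly α β j n).degree = (n + 1 : ℕ) := by
  rw [degree_sub_eq_left_of_degree_lt, degree_jacobiP hα hβ]
  rw [degree_jacobiP hα hβ, ← smul_eq_C_mul]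
  exact (degree_smul_le _ _).trans_lt (degree_kernKPoly_lt hα hβ j n)

lemma jacobiFunctional_jacobiP_sub_C_mul_kernKPoly_mul (hα : -1 < α) (hβ : -1 < β) {j : ℕ} (c : ℝ)
    {n : ℕ} {p : ℝ[X]} (hp : p.degree < (n + 1 : ℕ)) (hpj : (derivative^[j] p).eval 1 = 0) :
    jacobiFunctional hα hβ ((jacobiP α β (n + 1) - C c * kernKPoly α β j n) * p) = 0 := by
  rw [sub_mul, map_sub, jacobiFunctional_jacobiP_mul hα hβ hp, mul_assoc, ← smul_eq_C_mul,
    map_smul, jacobiFunctional_kernKPoly_mul hα hβ j hp, hpj, smul_zero, sub_zero]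

end JacobiSobolev

theorem sobQ_zeros_real_simple_general (α β : ℝ) (hα : -1 < α) (hβ : -1 < β) (j : ℕ) (c : ℝ)
    (n : ℕ) :
    Multiset.card (jacobiP α β (n + 1) - C c * kernKPoly α β j n).roots = n + 1 ∧
      (jacobiP α β (n + 1) - C c * kernKPoly α β j n).roots.Nodup ∧
      Multiset.card ((jacobiP α β (n + 1) - C c * kernKPoly α β j n).roots.filter
        (· ∉ Set.Ioo (-1 : ℝ) 1)) ≤ 1 := by
  have hdeg := degree_jacobiP_sub_C_mul_kernKPoly hα hβ j c n
  set Q := jacobiP α β (n + 1) - C c * kernKPoly α β j n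
  obtain ⟨hcard, hnodup, hfilter⟩ := roots_of_orthogonal_to_vanishing_derivative (Q := Q) (ξ := 1)
    isOpen_Ioo isPreconnected_Ioo (isPositiveOn_jacobiFunctional hα hβ) (fun x hx => hx.2.le)
    (degree_ne_bot.1 (by rw [hdeg]; exact WithBot.natCast_ne_bot _))
    fun p hp => jacobiFunctional_jacobiP_sub_C_mul_kernKPoly_mul hα hβ c (hdeg ▸ hp)
  exact ⟨hcard.trans (natDegree_eq_of_degree_eq_some hdeg), hnodup, hfilter⟩

/-- `Q_n` has `n` real simple zeros, at most one of which lies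
outside `[-1,1]`. -/
theorem sobQ_zeros_real_simple (α β : ℝ) (hα : -1 < α) (hβ : -1 < β) (j : ℕ)
    (Ms : ℕ → ℝ) (hMs : ∀ n, 0 ≤ Ms n) (n : ℕ) (hn : 1 ≤ n) :
    Multiset.card (sobQ α β j Ms n).roots = n ∧
      (sobQ α β j Ms n).roots.Nodup ∧
      Multiset.card ((sobQ α β j Ms n).roots.filter (fun x => x < -1 ∨ 1 < x)) ≤ 1 := by
  obtain ⟨n, rfl⟩ := Nat.exists_eq_add_of_le' hn
  obtain ⟨hcard, hnodup, hfilter⟩ := sobQ_zeros_real_simple_general α β hα hβ j _ n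
  refine ⟨hcard, hnodup, (Multiset.card_le_card ?_).trans hfilter⟩
  exact Multiset.monotone_filter_right _ fun x hx hmem => by
    rcases hx with hx | hx
    · exact hx.not_gt hmem.1
    · exact hx.not_gt hmem.2
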